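/- In the setting of the representation map ℛ and the matrices 𝒰, 𝒰̂ (defined from a basis p₀,…,p_{N−1} of polynomials of degree ≤ N−1, the integrated basis p̄, quadratures with positive weights exact for degrees 2N−2 and 2N respectively, stepsizes h_j > 0, and block structure U_j = blockdiag(I_k ⊗ h_j^{3/2}Γ̄V̄, I_{m−k} ⊗ h_j^{1/2}ΓV), Û_j = blockdiag(I_k ⊗ [h_j^{3/2}Γ̄V̄; h_j^{1/2}Γ̄V̊], I_{m−k} ⊗ h_j^{1/2}ΓV)), define ‖x‖²_{L²} = Σ_j Σ_{κ=1}^m ∫_{t_{j−1}}^{t_j}|x_κ|² and ‖x‖²_{H¹_{D,π}} = Σ_j{Σ_{κ≤k}∫(|x_κ|²+|x_κ′|²) + Σ_{κ>k}∫|x_κ|²}. Then: sup_{c≠0} ‖ℛc‖_{L²}/|c| = σ_max(𝒰), sup_{c≠0} |c|/‖ℛc‖_{L²} = σ_min(𝒰)^{−1}, sup_{c≠0} ‖ℛc‖_{H¹_{D,π}}/|c| = σ_max(𝒰̂), and sup_{c≠0} |c|/‖ℛc‖_{H¹_{D,π}} = σ_min(𝒰̂)^{−1}, where σ_max and σ_min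 denote the largest and smallest singular value. -/

import Mathlib

open MeasureTheory Matrix Polynomial
open scoped BigOperators

/-- `p̄₀ = 1`, `p̄ᵢ(τ) = ∫₀^τ p_{i-1}(σ) dσ`. -/
noncomputable def pbarEval (p : ℕ → Polynomial ℝ) : ℕ → ℝ → ℝ
  | 0, _ => 1
  | i + 1, τ => ∫ s in (0:ℝ)..τ, (p i).eval s

/-- A quadrature rule on `[0,1]` with nodes `0 ≤ σ₁ < … < σ_M ≤ 1` and positive weights,
exact for all polynomials of degree `≤ d`. -/
def IsQuad {M : ℕ} (σ γ : Fin M → ℝ) (d : ℕ) : Prop :=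
  (∀ i, σ i ∈ Set.Icc (0:ℝ) 1) ∧ StrictMono σ ∧ (∀ i, 0 < γ i) ∧
    ∀ q : Polynomial ℝ, q.natDegree ≤ d →
      ∑ i, γ i * q.eval (σ i) = ∫ s in (0:ℝ)..1, q.eval s

/-- Row/column index type for the block matrix `𝒰` (also the index type of coefficient
vectors `c`): block `j`, then either a "differential" index `(κ, l)` with `l : Fin (N+1)`
or an "algebraic" index with `l : Fin N`. -/
abbrev UIdx (N m k n : ℕ) := Fin n × (Fin k × Fin (N + 1) ⊕ Fin (m - k) × Fin N)

/-- Row index type for `𝒰̂`: in each differential block the rows of `h^{3/2}Γ̄V̄`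
are stacked above the rows of `h^{1/2}Γ̄V̊`. -/
abbrev UhIdx (N m k n : ℕ) := Fin n × (Fin k × (Fin (N + 1) ⊕ Fin (N + 1)) ⊕ Fin (m - k) × Fin N)

/-- `𝒰 = blockdiag(U₁,…,U_n)`, `U_j = blockdiag(I_k ⊗ h_j^{3/2}Γ̄V̄, I_{m-k} ⊗ h_j^{1/2}ΓV)`. -/
noncomputable def Umat (N m k n : ℕ) (p : ℕ → Polynomial ℝ) (h : Fin n → ℝ)
    (σ γ : Fin N → ℝ) (σb γb : Fin (N + 1) → ℝ) :
    Matrix (UIdx N m k n) (UIdx N m k n) ℝ :=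
  Matrix.of fun x y =>
    match x, y with
    | (j, Sum.inl (κ, i)), (j', Sum.inl (κ', α)) =>
        if j = j' ∧ κ = κ' then
          h j ^ ((3:ℝ)/2) * Real.sqrt (γb i) * pbarEval p (α : ℕ) (σb i) else 0
    | (j, Sum.inr (κ, i)), (j', Sum.inr (κ', α)) =>
        if j = j' ∧ κ = κ' then
          h j ^ ((1:ℝ)/2) * Real.sqrt (γ i) * (p (α : ℕ)).eval (σ i) else 0
    | _, _ => 0

/-- `𝒰̂ = blockdiag(Û₁,…,Û_n)`, where `Û_j` has the blocks `h_j^{3/2}Γ̄V̄` stacked above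
`h_j^{1/2}Γ̄V̊` in the differential part (`V̊_{iα} = p̄'_{α-1}(σ̄ᵢ)`), and
`I_{m-k} ⊗ h_j^{1/2}ΓV` in the algebraic part. -/
noncomputable def Uhmat (N m k n : ℕ) (p : ℕ → Polynomial ℝ) (h : Fin n → ℝ)
    (σ γ : Fin N → ℝ) (σb γb : Fin (N + 1) → ℝ) :
    Matrix (UhIdx N m k n) (UIdx N m k n) ℝ :=
  Matrix.of fun x y =>
    match x, y with
    | (j, Sum.inl (κ, Sum.inl i)), (j', Sum.inl (κ', α)) =>
        if j = j' ∧ κ = κ' then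
          h j ^ ((3:ℝ)/2) * Real.sqrt (γb i) * pbarEval p (α : ℕ) (σb i) else 0
    | (j, Sum.inl (κ, Sum.inr i)), (j', Sum.inl (κ', α)) =>
        if j = j' ∧ κ = κ' then
          h j ^ ((1:ℝ)/2) * Real.sqrt (γb i) * deriv (pbarEval p (α : ℕ)) (σb i) else 0
    | (j, Sum.inr (κ, i)), (j', Sum.inr (κ', α)) =>
        if j = j' ∧ κ = κ' then
          h j ^ ((1:ℝ)/2) * Real.sqrt (γ i) * (p (α : ℕ)).eval (σ i) else 0
    | _, _ => 0

/-- The differential components (`κ = 1,…,k`) of `x = ℛc` on the subinterval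
`[t_{j-1}, t_j)`:  `x_κ(s) = Σ_{l=0}^{N} c_{jκl} · h_j · p̄_l((s - t_{j-1})/h_j)`. -/
noncomputable def xdiff (N m k n : ℕ) (p : ℕ → Polynomial ℝ) (t : ℕ → ℝ)
    (c : UIdx N m k n → ℝ) (j : Fin n) (κ : Fin k) (s : ℝ) : ℝ :=
  ∑ l : Fin (N + 1), c (j, Sum.inl (κ, l)) *
    ((t ((j : ℕ) + 1) - t (j : ℕ)) *
      pbarEval p (l : ℕ) ((s - t (j : ℕ)) / (t ((j : ℕ) + 1) - t (j : ℕ))))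

/-- The algebraic components (`κ = k+1,…,m`) of `x = ℛc` on the subinterval
`[t_{j-1}, t_j)`:  `x_κ(s) = Σ_{l=0}^{N-1} c_{jκl} · p_l((s - t_{j-1})/h_j)`. -/
noncomputable def xalg (N m k n : ℕ) (p : ℕ → Polynomial ℝ) (t : ℕ → ℝ)
    (c : UIdx N m k n → ℝ) (j : Fin n) (κ : Fin (m - k)) (s : ℝ) : ℝ :=
  ∑ l : Fin N, c (j, Sum.inr (κ, l)) *
    (p (l : ℕ)).eval ((s - t (j : ℕ)) / (t ((j : ℕ) + 1) - t (j : ℕ)))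

/-- `‖ℛc‖²_{L²}`. -/
noncomputable def normL2sq (N m k n : ℕ) (p : ℕ → Polynomial ℝ) (t : ℕ → ℝ)
    (c : UIdx N m k n → ℝ) : ℝ :=
  ∑ j : Fin n,
    ((∑ κ : Fin k, ∫ s in t (j : ℕ)..t ((j : ℕ) + 1), (xdiff N m k n p t c j κ s) ^ 2) +
     ∑ κ : Fin (m - k), ∫ s in t (j : ℕ)..t ((j : ℕ) + 1), (xalg N m k n p t c j κ s) ^ 2)

/-- `‖ℛc‖²_{H¹_{D,π}}` (with piecewise derivatives of the differential components). -/
noncomputable def normH1sq (N m k n : ℕ) (p : ℕ → Polynomial ℝ) (t : ℕ → ℝ)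
    (c : UIdx N m k n → ℝ) : ℝ :=
  ∑ j : Fin n,
    ((∑ κ : Fin k, ∫ s in t (j : ℕ)..t ((j : ℕ) + 1),
        ((xdiff N m k n p t c j κ s) ^ 2 + (deriv (xdiff N m k n p t c j κ) s) ^ 2)) +
     ∑ κ : Fin (m - k), ∫ s in t (j : ℕ)..t ((j : ℕ) + 1), (xalg N m k n p t c j κ s) ^ 2)

/-- `s` is a singular value of `A`: `s ≥ 0` and `s²` is an eigenvalue of `AᵀA`. -/
def IsSingVal {I J : Type} [Fintype I] [Fintype J] (A : Matrix I J ℝ) (s : ℝ) : Prop :=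
  0 ≤ s ∧ ∃ v : J → ℝ, v ≠ 0 ∧ (Aᵀ * A).mulVec v = s ^ 2 • v

/-- Euclidean norm of a coefficient vector. -/
noncomputable def enormU {N m k n : ℕ} (c : UIdx N m k n → ℝ) : ℝ :=
  Real.sqrt (∑ i, c i ^ 2)

/-!
The integrands in `‖ℛc‖²` are, on each subinterval, squares of polynomials whose degrees the
quadratures integrate exactly, so `‖ℛc‖_{L²} = |𝒰c|` and `‖ℛc‖_{H¹_{D,π}} = |𝒰̂c|`. The extreme
values of `|Ac| / |c|` are the extreme singular values of `A`, since in the Loewner order `AᵀA`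
lies between the multiples of the identity by the squares of these. For the reciprocal quotients
`𝒰` has to be injective: a polynomial of degree below the number of quadrature nodes that vanishes
at all of them is zero, and both `p` and `p̄` are linearly independent.
-/

section QuadraticForms

open scoped MatrixOrder

variable {I J : Type*} [Fintype I] [Fintype J]

lemma dotProduct_self_eq_norm_sq (v : J → ℝ) : v ⬝ᵥ v = ‖WithLp.toLp 2 v‖ ^ 2 := by
  rw [EuclideanSpace.real_norm_sq_eq]
  simp only [dotProduct, sq]

lemma dotProduct_transpose_mul_self_mulVec (A : Matrix I J ℝ) (v : J → ℝ) :
    v ⬝ᵥ (Aᵀ * A) *ᵥ v = ‖WithLp.toLp 2 (A *ᵥ v)‖ ^ 2 := by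
  rw [← mulVec_mulVec, dotProduct_mulVec, vecMul_transpose, dotProduct_self_eq_norm_sq]

lemma dotProduct_mulVec_mono {M₁ M₂ : Matrix J J ℝ} (h : M₁ ≤ M₂) (v : J → ℝ) :
    v ⬝ᵥ M₁ *ᵥ v ≤ v ⬝ᵥ M₂ *ᵥ v := by
  have := (Matrix.le_iff.mp h).dotProduct_mulVec_nonneg v
  rwa [sub_mulVec, dotProduct_sub, star_trivial, sub_nonneg] at this

lemma norm_toLp_pos {v : J → ℝ} (hv : v ≠ 0) : 0 < ‖WithLp.toLp 2 v‖ :=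
  norm_pos_iff.mpr ((WithLp.toLp_eq_zero 2).not.mpr hv)

lemma dotProduct_algebraMap_mulVec [DecidableEq J] (r : ℝ) (v : J → ℝ) :
    v ⬝ᵥ algebraMap ℝ (Matrix J J ℝ) r *ᵥ v = r * ‖WithLp.toLp 2 v‖ ^ 2 := by
  rw [Algebra.algebraMap_eq_smul_one, smul_mulVec, one_mulVec, dotProduct_smul, smul_eq_mul,
    dotProduct_self_eq_norm_sq]

lemma nonneg_of_mem_spectrum_transpose_mul_self [DecidableEq J] {A : Matrix I J ℝ} {μ : ℝ}
    (hμ : μ ∈ spectrum ℝ (Aᵀ * A)) : 0 ≤ μ :=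
  (posSemidef_iff_isHermitian_and_spectrum_nonneg.mp
    (posSemidef_conjTranspose_mul_self A)).2 hμ

end QuadraticForms

section SingularValues

open scoped MatrixOrder

variable {I J : Type} [Fintype I] [Fintype J] {A : Matrix I J ℝ} {s : ℝ}

lemma IsSingVal.exists_norm_mulVec_eq (hs : IsSingVal A s) :
    ∃ v : J → ℝ, v ≠ 0 ∧ ‖WithLp.toLp 2 (A *ᵥ v)‖ = s * ‖WithLp.toLp 2 v‖ := by
  obtain ⟨hs₀, v, hv, hAv⟩ := hs
  refine ⟨v, hv, (sq_eq_sq₀ (norm_nonneg _) (by positivity)).mp ?_⟩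
  rw [← dotProduct_transpose_mul_self_mulVec, hAv, dotProduct_smul, smul_eq_mul,
    dotProduct_self_eq_norm_sq, mul_pow]

lemma isSingVal_sqrt_of_mem_spectrum [DecidableEq J] {μ : ℝ}
    (hμ : μ ∈ spectrum ℝ (Aᵀ * A)) : IsSingVal A √μ := by
  have hμ₀ := nonneg_of_mem_spectrum_transpose_mul_self hμ
  rw [← spectrum_toLin', ← Module.End.hasEigenvalue_iff_mem_spectrum] at hμ
  obtain ⟨v, hv⟩ := hμ.exists_hasEigenvector
  refine ⟨Real.sqrt_nonneg μ, v, hv.2, ?_⟩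
  rw [Real.sq_sqrt hμ₀, ← hv.apply_eq_smul, toLin'_apply]

lemma norm_mulVec_le_of_isGreatest (hs : IsGreatest {s | IsSingVal A s} s) (v : J → ℝ) :
    ‖WithLp.toLp 2 (A *ᵥ v)‖ ≤ s * ‖WithLp.toLp 2 v‖ := by
  classical
  have hs₀ : 0 ≤ s := hs.1.1
  have hle : Aᵀ * A ≤ algebraMap ℝ _ (s ^ 2) :=
    (le_algebraMap_iff_spectrum_le (isHermitian_conjTranspose_mul_self A)).mpr fun μ hμ =>
      (Real.sqrt_le_left hs₀).mp (hs.2 (isSingVal_sqrt_of_mem_spectrum hμ))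
  have hsq := dotProduct_mulVec_mono hle v
  rw [dotProduct_transpose_mul_self_mulVec, dotProduct_algebraMap_mulVec, ← mul_pow] at hsq
  exact le_of_sq_le_sq hsq (by positivity)

lemma le_norm_mulVec_of_isLeast (hs : IsLeast {s | IsSingVal A s} s) (v : J → ℝ) :
    s * ‖WithLp.toLp 2 v‖ ≤ ‖WithLp.toLp 2 (A *ᵥ v)‖ := by
  classical
  have hle : algebraMap ℝ _ (s ^ 2) ≤ Aᵀ * A :=
    (algebraMap_le_iff_le_spectrum (isHermitian_conjTranspose_mul_self A)).mpr fun μ hμ =>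
      (Real.le_sqrt hs.1.1 (nonneg_of_mem_spectrum_transpose_mul_self hμ)).mp
        (hs.2 (isSingVal_sqrt_of_mem_spectrum hμ))
  have hsq := dotProduct_mulVec_mono hle v
  rw [dotProduct_transpose_mul_self_mulVec, dotProduct_algebraMap_mulVec, ← mul_pow] at hsq
  exact le_of_sq_le_sq hsq (norm_nonneg _)

lemma isGreatest_norm_mulVec_div_norm (hs : IsGreatest {s | IsSingVal A s} s) :
    IsGreatest {r : ℝ | ∃ v : J → ℝ, v ≠ 0 ∧
      r = ‖WithLp.toLp 2 (A *ᵥ v)‖ / ‖WithLp.toLp 2 v‖} s := by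
  constructor
  · obtain ⟨v, hv, hAv⟩ := hs.1.exists_norm_mulVec_eq
    exact ⟨v, hv, by rw [hAv, mul_div_cancel_right₀ _ (norm_toLp_pos hv).ne']⟩
  · rintro _ ⟨v, hv, rfl⟩
    exact (div_le_iff₀ (norm_toLp_pos hv)).mpr (norm_mulVec_le_of_isGreatest hs v)

lemma isGreatest_norm_div_norm_mulVec (hA : Function.Injective A.mulVec)
    (hs : IsLeast {s | IsSingVal A s} s) :
    IsGreatest {r : ℝ | ∃ v : J → ℝ, v ≠ 0 ∧
      r = ‖WithLp.toLp 2 v‖ / ‖WithLp.toLp 2 (A *ᵥ v)‖} s⁻¹ := by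
  have norm_mulVec_pos {v : J → ℝ} (hv : v ≠ 0) : 0 < ‖WithLp.toLp 2 (A *ᵥ v)‖ :=
    norm_toLp_pos fun h => hv (hA (h.trans (mulVec_zero A).symm))
  obtain ⟨w, hw, hAw⟩ := hs.1.exists_norm_mulVec_eq
  have hs_pos : 0 < s := pos_of_mul_pos_left (hAw ▸ norm_mulVec_pos hw) (norm_nonneg _)
  constructor
  · exact ⟨w, hw, by rw [hAw, div_mul_cancel_right₀ (norm_toLp_pos hw).ne']⟩
  · rintro _ ⟨v, hv, rfl⟩
    rw [div_le_iff₀ (norm_mulVec_pos hv), le_inv_mul_iff₀ hs_pos]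
    exact le_norm_mulVec_of_isLeast hs v

end SingularValues

section Antiderivative

variable {K : Type*} [Field K]

/-- The antiderivative of a polynomial with constant term zero, as a linear map. In positive
characteristic the coefficients dividing by zero are dropped. -/
noncomputable def antiderivative : K[X] →ₗ[K] K[X] :=
  lsum fun i => ((i : K) + 1)⁻¹ • monomial (i + 1)

lemma antiderivative_monomial (i : ℕ) (a : K) :
    antiderivative (monomial i a) = monomial (i + 1) (((i : K) + 1)⁻¹ * a) := by
  simp [antiderivative, lsum_apply, smul_monomial]

lemma eval_zero_antiderivative (q : K[X]) : (antiderivative q).eval 0 = 0 := by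
  induction q using Polynomial.induction_on' with
  | add f g hf hg => rw [map_add, eval_add, hf, hg, add_zero]
  | monomial i a => simp [antiderivative_monomial]

lemma natDegree_antiderivative_le (q : K[X]) :
    (antiderivative q).natDegree ≤ q.natDegree + 1 := by
  conv_lhs => rw [q.as_sum_range, map_sum]
  refine natDegree_sum_le_of_forall_le _ _ fun i hi => ?_
  rw [antiderivative_monomial]
  exact (natDegree_monomial_le _).trans (Finset.mem_range.mp hi)

lemma derivative_antiderivative [CharZero K] (q : K[X]) :
    derivative (antiderivative q) = q := by
  induction q using Polynomial.induction_on' with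
  | add f g hf hg => rw [map_add, derivative_add, hf, hg]
  | monomial i a =>
    have : (i : K) + 1 ≠ 0 := by exact_mod_cast i.succ_ne_zero
    rw [antiderivative_monomial, derivative_monomial, Nat.cast_succ, mul_right_comm,
      inv_mul_cancel₀ this, one_mul, Nat.succ_sub_one]

lemma integral_eval_eq_sub (q : ℝ[X]) (a b : ℝ) :
    ∫ s in a..b, q.eval s = (antiderivative q).eval b - (antiderivative q).eval a := by
  have hderiv (x : ℝ) : HasDerivAt (fun x => (antiderivative q).eval x) (q.eval x) x := by
    simpa only [derivative_antiderivative] using (antiderivative q).hasDerivAt x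
  exact intervalIntegral.integral_eq_sub_of_hasDerivAt (fun x _ => hderiv x)
    (q.continuous.intervalIntegrable a b)

end Antiderivative

section IntegratedBasis

/-- The integrated basis `p̄` as polynomials: `p̄₀ = 1` and `p̄ᵢ₊₁` is the antiderivative of `pᵢ`
vanishing at `0`; `pbarEval` is its evaluation. -/
noncomputable def pbarPoly (p : ℕ → ℝ[X]) : ℕ → ℝ[X]
  | 0 => 1
  | i + 1 => antiderivative (p i)

variable {p : ℕ → ℝ[X]} {N : ℕ}

lemma pbarEval_eq_eval_pbarPoly (p : ℕ → ℝ[X]) (l : ℕ) :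
    pbarEval p l = fun τ => (pbarPoly p l).eval τ := by
  funext τ
  cases l with
  | zero => simp only [pbarEval, pbarPoly, eval_one]
  | succ i =>
    simp only [pbarEval, pbarPoly, integral_eval_eq_sub, eval_zero_antiderivative, sub_zero]

lemma natDegree_pbarPoly_le (hdeg : ∀ i < N, (p i).natDegree ≤ N - 1) (l : Fin (N + 1)) :
    (pbarPoly p l).natDegree ≤ N := by
  obtain ⟨_ | i, hl⟩ := l
  · simp [pbarPoly]
  · have h := natDegree_antiderivative_le (p i)
    have := hdeg i (by omega)
    simp only [pbarPoly]
    omega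

lemma linearIndependent_pbarPoly (hli : LinearIndependent ℝ fun i : Fin N => p i) :
    LinearIndependent ℝ fun l : Fin (N + 1) => pbarPoly p l := by
  have hcons : (fun l : Fin (N + 1) => pbarPoly p l) =
      Fin.cons 1 fun i : Fin N => antiderivative (p i) :=
    funext fun l => Fin.cases rfl (fun _ => rfl) l
  rw [hcons, linearIndependent_finCons]
  constructor
  · refine LinearIndependent.of_comp derivative ?_
    simpa only [Function.comp_def, derivative_antiderivative] using hli
  · intro hmem
    have hspan : Submodule.span ℝ (Set.range fun i : Fin N => antiderivative (p i)) ≤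
        LinearMap.ker (leval (0 : ℝ)) :=
      Submodule.span_le.mpr <| Set.range_subset_iff.mpr fun i => eval_zero_antiderivative (p i)
    simpa using hspan hmem

end IntegratedBasis

namespace IsQuad

variable {M d : ℕ} {σ γ : Fin M → ℝ} {q : ℝ[X]} {a b r : ℝ}

lemma weight_pos (hq : IsQuad σ γ d) (i : Fin M) : 0 < γ i := hq.2.2.1 i

lemma integral_eval_div (hq : IsQuad σ γ d) (hdeg : q.natDegree ≤ d) (hab : a < b) :
    ∫ s in a..b, q.eval ((s - a) / (b - a)) = (b - a) * ∑ i, γ i * q.eval (σ i) := by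
  have hne : b - a ≠ 0 := (sub_pos.mpr hab).ne'
  simp only [sub_div _ a]
  rw [intervalIntegral.integral_comp_div_sub (fun s => q.eval s) hne, ← sub_div, ← sub_div,
    sub_self, zero_div, div_self hne, hq.2.2.2 q hdeg, smul_eq_mul]

lemma integral_sq_eval_div (hq : IsQuad σ γ d) (hdeg : 2 * q.natDegree ≤ d) (hab : a < b) :
    ∫ s in a..b, q.eval ((s - a) / (b - a)) ^ 2 =
      ∑ i, ((b - a) ^ ((1 : ℝ) / 2) * √(γ i) * q.eval (σ i)) ^ 2 := by
  simp only [← eval_pow]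
  rw [hq.integral_eval_div (natDegree_pow_le.trans hdeg) hab, Finset.mul_sum]
  refine Finset.sum_congr rfl fun i _ => ?_
  rw [← Real.sqrt_eq_rpow, mul_pow, mul_pow, Real.sq_sqrt (sub_pos.mpr hab).le,
    Real.sq_sqrt (hq.weight_pos i).le, eval_pow, mul_assoc]

lemma eq_zero_of_eval_nodes (hq : IsQuad σ γ d) (hdeg : q.natDegree < M) (hr : 0 < r)
    (h : ∀ i, r * √(γ i) * q.eval (σ i) = 0) : q = 0 := by
  refine eq_zero_of_natDegree_lt_card_of_eval_eq_zero q hq.2.1.injective (fun i => ?_)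
    (by rwa [Fintype.card_fin])
  have hweight : r * √(γ i) ≠ 0 := (mul_pos hr (Real.sqrt_pos.mpr (hq.weight_pos i))).ne'
  exact (mul_eq_zero.mp (h i)).resolve_left hweight

end IsQuad

/-- The stepsizes `h_j = t_j - t_{j-1}`, with `j` counted from `0`. -/
def stepSize {n : ℕ} (t : ℕ → ℝ) (j : Fin n) : ℝ := t ((j : ℕ) + 1) - t (j : ℕ)

section RepresentationMap

variable {N m k n : ℕ} {p : ℕ → ℝ[X]} {t : ℕ → ℝ} {c : UIdx N m k n → ℝ} {j : Fin n}
  {κ : Fin k} {ν : Fin (m - k)}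

/-- The polynomial `Σ_l c_{jκl} p̄_l` on the reference interval `[0, 1]` behind a differential
component of `ℛc`; the factor `h_j` is left out. -/
noncomputable def diffPoly (p : ℕ → ℝ[X]) (c : UIdx N m k n → ℝ) (j : Fin n) (κ : Fin k) :
    ℝ[X] :=
  ∑ l : Fin (N + 1), c (j, Sum.inl (κ, l)) • pbarPoly p l

/-- The polynomial `Σ_l c_{jκl} p_l` on the reference interval `[0, 1]` behind an algebraic
component of `ℛc`. -/
noncomputable def algPoly (p : ℕ → ℝ[X]) (c : UIdx N m k n → ℝ) (j : Fin n) (ν : Fin (m - k)) :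
    ℝ[X] :=
  ∑ l : Fin N, c (j, Sum.inr (ν, l)) • p l

lemma natDegree_diffPoly_le (hdeg : ∀ i < N, (p i).natDegree ≤ N - 1) :
    (diffPoly p c j κ).natDegree ≤ N :=
  natDegree_sum_le_of_forall_le _ _ fun l _ =>
    (natDegree_smul_le _ _).trans (natDegree_pbarPoly_le hdeg l)

lemma natDegree_algPoly_le (hdeg : ∀ i < N, (p i).natDegree ≤ N - 1) :
    (algPoly p c j ν).natDegree ≤ N - 1 :=
  natDegree_sum_le_of_forall_le _ _ fun l _ => (natDegree_smul_le _ _).trans (hdeg l l.2)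

lemma xdiff_eq (p : ℕ → ℝ[X]) (t : ℕ → ℝ) (c : UIdx N m k n → ℝ) (j : Fin n) (κ : Fin k) :
    xdiff N m k n p t c j κ = fun s =>
      stepSize t j * (diffPoly p c j κ).eval ((s - t j) / stepSize t j) := by
  funext s
  simp only [xdiff, diffPoly, stepSize, pbarEval_eq_eval_pbarPoly, eval_finsetSum, eval_smul,
    smul_eq_mul, Finset.mul_sum, mul_left_comm]

lemma xalg_eq (p : ℕ → ℝ[X]) (t : ℕ → ℝ) (c : UIdx N m k n → ℝ) (j : Fin n)
    (ν : Fin (m - k)) :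
    xalg N m k n p t c j ν = fun s => (algPoly p c j ν).eval ((s - t j) / stepSize t j) := by
  funext s
  simp only [xalg, algPoly, stepSize, eval_finsetSum, eval_smul, smul_eq_mul]

lemma deriv_xdiff (hj : stepSize t j ≠ 0) :
    deriv (xdiff N m k n p t c j κ) = fun s =>
      (derivative (diffPoly p c j κ)).eval ((s - t j) / stepSize t j) := by
  funext s
  have hscale : HasDerivAt (fun s => (s - t j) / stepSize t j) (1 / stepSize t j) s :=
    ((hasDerivAt_id s).sub_const _).div_const _
  have hchain := (((diffPoly p c j κ).hasDerivAt _).comp s hscale).const_mul (stepSize t j)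
  rw [xdiff_eq]
  refine hchain.deriv.trans ?_
  rw [mul_left_comm, mul_one_div_cancel hj, mul_one]

lemma continuous_xdiff (p : ℕ → ℝ[X]) (t : ℕ → ℝ) (c : UIdx N m k n → ℝ) (j : Fin n)
    (κ : Fin k) : Continuous (xdiff N m k n p t c j κ) := by
  rw [xdiff_eq]
  fun_prop

lemma continuous_deriv_xdiff (hj : stepSize t j ≠ 0) :
    Continuous (deriv (xdiff N m k n p t c j κ)) := by
  rw [deriv_xdiff hj]
  fun_prop

end RepresentationMap

section BlockMatrices

variable {N m k n : ℕ} (p : ℕ → ℝ[X]) (h : Fin n → ℝ) (σ γ : Fin N → ℝ)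
  (σb γb : Fin (N + 1) → ℝ) (c : UIdx N m k n → ℝ) (j : Fin n) (κ : Fin k) (ν : Fin (m - k))

lemma Umat_mulVec_inl (i : Fin (N + 1)) :
    (Umat N m k n p h σ γ σb γb *ᵥ c) (j, Sum.inl (κ, i)) =
      h j ^ ((3 : ℝ) / 2) * √(γb i) * (diffPoly p c j κ).eval (σb i) := by
  simp only [mulVec, dotProduct, Umat, of_apply, Fintype.sum_prod_type, Fintype.sum_sum_type,
    ite_and, ite_mul, zero_mul, Finset.sum_const_zero, add_zero, Finset.sum_ite_irrel,
    Finset.sum_ite_eq, Finset.mem_univ, if_true, diffPoly, pbarEval_eq_eval_pbarPoly,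
    eval_finsetSum, eval_smul, smul_eq_mul, Finset.mul_sum]
  exact Finset.sum_congr rfl fun l _ => by ring

lemma Umat_mulVec_inr (i : Fin N) :
    (Umat N m k n p h σ γ σb γb *ᵥ c) (j, Sum.inr (ν, i)) =
      h j ^ ((1 : ℝ) / 2) * √(γ i) * (algPoly p c j ν).eval (σ i) := by
  simp only [mulVec, dotProduct, Umat, of_apply, Fintype.sum_prod_type, Fintype.sum_sum_type,
    ite_and, ite_mul, zero_mul, Finset.sum_const_zero, zero_add, Finset.sum_ite_irrel,
    Finset.sum_ite_eq, Finset.mem_univ, if_true, algPoly, eval_finsetSum, eval_smul,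
    smul_eq_mul, Finset.mul_sum]
  exact Finset.sum_congr rfl fun l _ => by ring

lemma Uhmat_mulVec_inl_inl (i : Fin (N + 1)) :
    (Uhmat N m k n p h σ γ σb γb *ᵥ c) (j, Sum.inl (κ, Sum.inl i)) =
      (Umat N m k n p h σ γ σb γb *ᵥ c) (j, Sum.inl (κ, i)) := by
  have hrow : Uhmat N m k n p h σ γ σb γb (j, Sum.inl (κ, Sum.inl i)) =
      Umat N m k n p h σ γ σb γb (j, Sum.inl (κ, i)) := by
    funext y
    rcases y with ⟨_, _ | _⟩ <;> rfl
  simp only [mulVec, hrow]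

lemma Uhmat_mulVec_inl_inr (i : Fin (N + 1)) :
    (Uhmat N m k n p h σ γ σb γb *ᵥ c) (j, Sum.inl (κ, Sum.inr i)) =
      h j ^ ((1 : ℝ) / 2) * √(γb i) * (derivative (diffPoly p c j κ)).eval (σb i) := by
  simp only [mulVec, dotProduct, Uhmat, of_apply, Fintype.sum_prod_type, Fintype.sum_sum_type,
    ite_and, ite_mul, zero_mul, Finset.sum_const_zero, add_zero, Finset.sum_ite_irrel,
    Finset.sum_ite_eq, Finset.mem_univ, if_true, diffPoly, pbarEval_eq_eval_pbarPoly,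
    Polynomial.deriv, derivative_sum, derivative_smul, eval_finsetSum, eval_smul, smul_eq_mul,
    Finset.mul_sum]
  exact Finset.sum_congr rfl fun l _ => by ring

lemma Uhmat_mulVec_inr (i : Fin N) :
    (Uhmat N m k n p h σ γ σb γb *ᵥ c) (j, Sum.inr (ν, i)) =
      (Umat N m k n p h σ γ σb γb *ᵥ c) (j, Sum.inr (ν, i)) := by
  have hrow : Uhmat N m k n p h σ γ σb γb (j, Sum.inr (ν, i)) =
      Umat N m k n p h σ γ σb γb (j, Sum.inr (ν, i)) := by
    funext y
    rcases y with ⟨_, _ | _⟩ <;> rfl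
  simp only [mulVec, hrow]

variable {p h σ γ σb γb c j κ ν}

lemma Umat_mulVec_injective {d db : ℕ} (hh : ∀ j, 0 < h j)
    (hdeg : ∀ i < N, (p i).natDegree ≤ N - 1)
    (hli : LinearIndependent ℝ fun i : Fin N => p i)
    (hq : IsQuad σ γ d) (hqb : IsQuad σb γb db) :
    Function.Injective (Umat N m k n p h σ γ σb γb).mulVec := by
  refine (injective_iff_map_eq_zero (Umat N m k n p h σ γ σb γb).mulVecLin).mpr fun c hc => ?_
  funext ⟨j, x⟩
  rcases x with ⟨κ, l⟩ | ⟨ν, l⟩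
  · have hzero : diffPoly p c j κ = 0 :=
      hqb.eq_zero_of_eval_nodes (Nat.lt_succ_of_le (natDegree_diffPoly_le hdeg))
        (Real.rpow_pos_of_pos (hh j) _) fun i =>
          (Umat_mulVec_inl p h σ γ σb γb c j κ i).symm.trans (congrFun hc _)
    exact Fintype.linearIndependent_iff.mp (linearIndependent_pbarPoly hli) _ hzero l
  · have hlt : (algPoly p c j ν).natDegree < N :=
      (natDegree_algPoly_le hdeg).trans_lt (Nat.sub_one_lt_of_lt l.pos)
    have hzero : algPoly p c j ν = 0 :=
      hq.eq_zero_of_eval_nodes hlt (Real.rpow_pos_of_pos (hh j) _) fun i =>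
        (Umat_mulVec_inr p h σ γ σb γb c j ν i).symm.trans (congrFun hc _)
    exact Fintype.linearIndependent_iff.mp hli _ hzero l

lemma Uhmat_mulVec_injective (hU : Function.Injective (Umat N m k n p h σ γ σb γb).mulVec) :
    Function.Injective (Uhmat N m k n p h σ γ σb γb).mulVec := by
  intro c₁ c₂ hc
  refine hU (funext ?_)
  rintro ⟨j, ⟨κ, i⟩ | ⟨ν, i⟩⟩
  · simpa only [Uhmat_mulVec_inl_inl] using congrFun hc (j, Sum.inl (κ, Sum.inl i))
  · simpa only [Uhmat_mulVec_inr] using congrFun hc (j, Sum.inr (ν, i))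

end BlockMatrices

section NormIdentities

variable {N m k n : ℕ} {p : ℕ → ℝ[X]} {t : ℕ → ℝ} {σ γ : Fin N → ℝ} {σb γb : Fin (N + 1) → ℝ}
  {c : UIdx N m k n → ℝ} {j : Fin n} {κ : Fin k} {ν : Fin (m - k)}

lemma integral_sq_xdiff (hqb : IsQuad σb γb (2 * N)) (hdeg : ∀ i < N, (p i).natDegree ≤ N - 1)
    (hj : t j < t (j + 1)) :
    ∫ s in t j..t (j + 1), xdiff N m k n p t c j κ s ^ 2 =
      ∑ i, (Umat N m k n p (stepSize t) σ γ σb γb *ᵥ c) (j, Sum.inl (κ, i)) ^ 2 := by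
  have hstep : stepSize t j ≠ 0 := (sub_pos.mpr hj).ne'
  have hdegree : 2 * (C (stepSize t j) * diffPoly p c j κ).natDegree ≤ 2 * N :=
    Nat.mul_le_mul_left 2 ((natDegree_C_mul_le _ _).trans (natDegree_diffPoly_le hdeg))
  have hpow : stepSize t j ^ ((3 : ℝ) / 2) = stepSize t j ^ ((1 : ℝ) / 2) * stepSize t j := by
    rw [← Real.rpow_add_one hstep]
    norm_num
  have hint := hqb.integral_sq_eval_div hdegree hj
  simp only [eval_mul, eval_C] at hint
  simp only [xdiff_eq, Umat_mulVec_inl, hpow]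
  refine hint.trans (Finset.sum_congr rfl fun i _ => ?_)
  rw [stepSize]
  ring

lemma integral_sq_deriv_xdiff (hqb : IsQuad σb γb (2 * N))
    (hdeg : ∀ i < N, (p i).natDegree ≤ N - 1) (hj : t j < t (j + 1)) :
    ∫ s in t j..t (j + 1), deriv (xdiff N m k n p t c j κ) s ^ 2 =
      ∑ i, (Uhmat N m k n p (stepSize t) σ γ σb γb *ᵥ c) (j, Sum.inl (κ, Sum.inr i)) ^ 2 := by
  have hdegree : 2 * (derivative (diffPoly p c j κ)).natDegree ≤ 2 * N :=
    Nat.mul_le_mul_left 2 <|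
      (natDegree_derivative_le _).trans ((Nat.sub_le _ _).trans (natDegree_diffPoly_le hdeg))
  simp only [deriv_xdiff (sub_pos.mpr hj).ne', Uhmat_mulVec_inl_inr]
  exact hqb.integral_sq_eval_div hdegree hj

lemma integral_sq_xalg (hq : IsQuad σ γ (2 * N - 2)) (hdeg : ∀ i < N, (p i).natDegree ≤ N - 1)
    (hj : t j < t (j + 1)) :
    ∫ s in t j..t (j + 1), xalg N m k n p t c j ν s ^ 2 =
      ∑ i, (Umat N m k n p (stepSize t) σ γ σb γb *ᵥ c) (j, Sum.inr (ν, i)) ^ 2 := by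
  have hdegree : 2 * (algPoly p c j ν).natDegree ≤ 2 * N - 2 := by
    have := natDegree_algPoly_le (c := c) (j := j) (ν := ν) hdeg
    omega
  simp only [xalg_eq, Umat_mulVec_inr]
  exact hq.integral_sq_eval_div hdegree hj

lemma normL2sq_eq_sq_norm_mulVec (hmono : ∀ j < n, t j < t (j + 1))
    (hdeg : ∀ i < N, (p i).natDegree ≤ N - 1) (hq : IsQuad σ γ (2 * N - 2))
    (hqb : IsQuad σb γb (2 * N)) (c : UIdx N m k n → ℝ) :
    normL2sq N m k n p t c =
      ‖WithLp.toLp 2 (Umat N m k n p (stepSize t) σ γ σb γb *ᵥ c)‖ ^ 2 := by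
  rw [EuclideanSpace.real_norm_sq_eq]
  simp only [normL2sq, Fintype.sum_prod_type, Fintype.sum_sum_type]
  refine Finset.sum_congr rfl fun j _ => congrArg₂ (· + ·) ?_ ?_
  · exact Finset.sum_congr rfl fun κ _ => integral_sq_xdiff hqb hdeg (hmono j j.2)
  · exact Finset.sum_congr rfl fun ν _ => integral_sq_xalg hq hdeg (hmono j j.2)

lemma normH1sq_eq_sq_norm_mulVec (hmono : ∀ j < n, t j < t (j + 1))
    (hdeg : ∀ i < N, (p i).natDegree ≤ N - 1) (hq : IsQuad σ γ (2 * N - 2))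
    (hqb : IsQuad σb γb (2 * N)) (c : UIdx N m k n → ℝ) :
    normH1sq N m k n p t c =
      ‖WithLp.toLp 2 (Uhmat N m k n p (stepSize t) σ γ σb γb *ᵥ c)‖ ^ 2 := by
  rw [EuclideanSpace.real_norm_sq_eq]
  simp only [normH1sq, Fintype.sum_prod_type, Fintype.sum_sum_type, Uhmat_mulVec_inl_inl,
    Uhmat_mulVec_inr]
  refine Finset.sum_congr rfl fun j _ => congrArg₂ (· + ·) ?_ ?_
  · refine Finset.sum_congr rfl fun κ _ => ?_
    have hj := hmono j j.2
    have hx : IntervalIntegrable (fun s => xdiff N m k n p t c j κ s ^ 2) volume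
        (t j) (t (j + 1)) :=
      ((continuous_xdiff p t c j κ).pow 2).intervalIntegrable _ _
    have hdx : IntervalIntegrable (fun s => deriv (xdiff N m k n p t c j κ) s ^ 2) volume
        (t j) (t (j + 1)) :=
      ((continuous_deriv_xdiff (sub_pos.mpr hj).ne').pow 2).intervalIntegrable _ _
    rw [intervalIntegral.integral_add hx hdx, integral_sq_xdiff hqb hdeg hj,
      integral_sq_deriv_xdiff hqb hdeg hj]
  · exact Finset.sum_congr rfl fun ν _ => integral_sq_xalg hq hdeg (hmono j j.2)

lemma enormU_eq_norm (c : UIdx N m k n → ℝ) : enormU c = ‖WithLp.toLp 2 c‖ := by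
  rw [enormU, ← EuclideanSpace.real_norm_sq_eq (WithLp.toLp 2 c), Real.sqrt_sq (norm_nonneg _)]

end NormIdentities

theorem stmt4 (N m k n : ℕ) (hN : 1 ≤ N) (hk : 1 ≤ k) (hkm : k < m) (hn : 1 ≤ n)
    (t : ℕ → ℝ) (hmono : ∀ j < n, t j < t (j + 1))
    (p : ℕ → Polynomial ℝ)
    (hdeg : ∀ i < N, (p i).natDegree ≤ N - 1)
    (hli : LinearIndependent ℝ fun i : Fin N => p i)
    (σ γ : Fin N → ℝ) (σb γb : Fin (N + 1) → ℝ)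
    (hq : IsQuad σ γ (2 * N - 2)) (hqb : IsQuad σb γb (2 * N))
    (smaxU sminU smaxUh sminUh : ℝ)
    (hsmaxU : IsGreatest
      {s | IsSingVal (Umat N m k n p (fun j => t ((j : ℕ) + 1) - t (j : ℕ)) σ γ σb γb) s} smaxU)
    (hsminU : IsLeast
      {s | IsSingVal (Umat N m k n p (fun j => t ((j : ℕ) + 1) - t (j : ℕ)) σ γ σb γb) s} sminU)
    (hsmaxUh : IsGreatest
      {s | IsSingVal (Uhmat N m k n p (fun j => t ((j : ℕ) + 1) - t (j : ℕ)) σ γ σb γb) s} smaxUh)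
    (hsminUh : IsLeast
      {s | IsSingVal (Uhmat N m k n p (fun j => t ((j : ℕ) + 1) - t (j : ℕ)) σ γ σb γb) s} sminUh) :
    sSup {r : ℝ | ∃ c : UIdx N m k n → ℝ, c ≠ 0 ∧
        r = Real.sqrt (normL2sq N m k n p t c) / enormU c} = smaxU ∧
    sSup {r : ℝ | ∃ c : UIdx N m k n → ℝ, c ≠ 0 ∧
        r = enormU c / Real.sqrt (normL2sq N m k n p t c)} = sminU⁻¹ ∧
    sSup {r : ℝ | ∃ c : UIdx N m k n → ℝ, c ≠ 0 ∧
        r = Real.sqrt (normH1sq N m k n p t c) / enormU c} = smaxUh ∧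
    sSup {r : ℝ | ∃ c : UIdx N m k n → ℝ, c ≠ 0 ∧
        r = enormU c / Real.sqrt (normH1sq N m k n p t c)} = sminUh⁻¹ := by
  have hL2 (c : UIdx N m k n → ℝ) : √(normL2sq N m k n p t c) =
      ‖WithLp.toLp 2 (Umat N m k n p (stepSize t) σ γ σb γb *ᵥ c)‖ := by
    rw [normL2sq_eq_sq_norm_mulVec hmono hdeg hq hqb c, Real.sqrt_sq (norm_nonneg _)]
  have hH1 (c : UIdx N m k n → ℝ) : √(normH1sq N m k n p t c) =
      ‖WithLp.toLp 2 (Uhmat N m k n p (stepSize t) σ γ σb γb *ᵥ c)‖ := by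
    rw [normH1sq_eq_sq_norm_mulVec hmono hdeg hq hqb c, Real.sqrt_sq (norm_nonneg _)]
  have hU : Function.Injective (Umat N m k n p (stepSize t) σ γ σb γb).mulVec :=
    Umat_mulVec_injective (fun j => sub_pos.mpr (hmono j j.2)) hdeg hli hq hqb
  simp only [hL2, hH1, enormU_eq_norm]
  exact ⟨(isGreatest_norm_mulVec_div_norm hsmaxU).csSup_eq,
    (isGreatest_norm_div_norm_mulVec hU hsminU).csSup_eq,
    (isGreatest_norm_mulVec_div_norm hsmaxUh).csSup_eq,
    (isGreatest_norm_div_norm_mulVec (Uhmat_mulVec_injective hU) hsminUh).csSup_eq⟩
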